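/- Let G be a finite group, let (σ_j)_{j∈J} be a complete family of irreducibles for G, let M ⊆ G be a conjugacy class of involutions with representative m₀, let k ≥ 1, let (ρ_i)_{i∈T} be a complete family of irreducibles for G^k acting on spaces V_i of dimensions d_i, and for each i let B_i be an orthonormal basis of V_i. Let Λ ⊆ J, P(Λ) = Σ_{j∈Λ} d_j²/|G|, and let λ be a real number with 0 ≤ λ ≤ 1 and |χ_j(m₀)| ≤ λ·d_j for every j ∈ J \ Λ. For m ∈ M, i ∈ T, b ∈ B_i, set H_m(i,b) = ‖Π_m^{(i)} b‖² / rank(Π_m^{(i)}), with the convention x/0 = 0. Then Σ_{i∈T} (d_i²/|G|^k) Σ_{b∈B_i} | 1/d_i − (1/|M|) Σ_{m∈M} H_m(i,b) | ≤ 2 · 2^k · (λ + P(Λ)). -/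

import Mathlib

noncomputable section

open scoped BigOperators InnerProductSpace

def IsUnitaryRep {G V : Type*} [Group G] [NormedAddCommGroup V] [InnerProductSpace ℂ V]
    (ρ : Representation ℂ G V) : Prop :=
  ∀ (g : G) (v w : V), ⟪ρ g v, ρ g w⟫_ℂ = ⟪v, w⟫_ℂ

def IsIrreducibleRep {G V : Type*} [Group G] [AddCommGroup V] [Module ℂ V]
    (ρ : Representation ℂ G V) : Prop :=
  (∃ v : V, v ≠ 0) ∧
    ∀ W : Submodule ℂ V, (∀ (g : G) (v : V), v ∈ W → ρ g v ∈ W) → W = ⊥ ∨ W = ⊤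

def RepIso {G V₁ V₂ : Type*} [Group G] [AddCommGroup V₁] [Module ℂ V₁]
    [AddCommGroup V₂] [Module ℂ V₂]
    (ρ₁ : Representation ℂ G V₁) (ρ₂ : Representation ℂ G V₂) : Prop :=
  ∃ e : V₁ ≃ₗ[ℂ] V₂, ∀ (g : G) (v : V₁), e (ρ₁ g v) = ρ₂ g (e v)

def repChar {G V : Type*} [Group G] [AddCommGroup V] [Module ℂ V]
    (ρ : Representation ℂ G V) (g : G) : ℂ := LinearMap.trace ℂ V (ρ g)

def IsCompleteFamily {G : Type*} [Group G] {J : Type*}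
    (W : J → Type*) [∀ j, NormedAddCommGroup (W j)] [∀ j, InnerProductSpace ℂ (W j)]
    [∀ j, FiniteDimensional ℂ (W j)]
    (σ : ∀ j, Representation ℂ G (W j)) : Prop :=
  (∀ j, IsUnitaryRep (σ j)) ∧ (∀ j, IsIrreducibleRep (σ j)) ∧
    (∀ j j', j ≠ j' → ¬ RepIso (σ j) (σ j')) ∧
    (∀ (U : Type) [AddCommGroup U] [Module ℂ U] [FiniteDimensional ℂ U]
      (τ : Representation ℂ G U), IsIrreducibleRep τ → ∃ j, RepIso τ (σ j))

def isoProj {G V : Type*} [Group G] [Fintype G] [AddCommGroup V] [Module ℂ V]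
    (d : ℕ) (χ : G → ℂ) (ρ : Representation ℂ G V) : V →ₗ[ℂ] V :=
  ((d : ℂ) / (Fintype.card G : ℂ)) • ∑ g : G, starRingEnd ℂ (χ g) • (ρ g : V →ₗ[ℂ] V)

def onI {G : Type*} [One G] {k : ℕ} (g : G) (I : Finset (Fin k)) : Fin k → G :=
  fun i => if i ∈ I then g else 1

def invProj {G V : Type*} [Group G] [AddCommGroup V] [Module ℂ V] {k : ℕ}
    (ρ : Representation ℂ (Fin k → G) V) (m : G) : V →ₗ[ℂ] V :=
  ((2 : ℂ) ^ k)⁻¹ • ∑ I : Finset (Fin k), (ρ (onI m I) : V →ₗ[ℂ] V)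

def isoProjI {G V : Type*} [Group G] [Fintype G] [AddCommGroup V] [Module ℂ V] {k : ℕ}
    (ρ : Representation ℂ (Fin k → G) V) (d : ℕ) (χ : G → ℂ) (I : Finset (Fin k)) :
    V →ₗ[ℂ] V :=
  ((d : ℂ) / (Fintype.card G : ℂ)) • ∑ g : G, starRingEnd ℂ (χ g) • (ρ (onI g I) : V →ₗ[ℂ] V)

/-!
Write `e_j` for the central idempotent of `ℂ[G]` attached to `σ_j`. The `e_j` sum to `1` and act as
orthogonal projections in every unitary representation, and by Schur's lemma the average of the
class `M` is `∑ j, (χ_j(m₀) / d_j) e_j`.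

Since `2 ^ k Π_m = ∑ I, ρ(m^I)`, averaging `2 ^ k ‖Π_m b‖² = ∑ I, ⟪b, ρ(m^I) b⟫` over `m ∈ M` gives
`1`, from `I = ∅`, plus for each nonempty `I` the matrix coefficient at `b` of the class average
pulled back along the embedding `g ↦ g^I`. That coefficient has modulus at most
`λ + ∑ j ∈ Λ, ‖e_j b‖²`. The regular character of `G^k` restricts along `g ↦ g^I` to a multiple of
the regular character of `G`, so the Plancherel mean of `‖e_j b‖²` is `d_j² / |G|`, and each of the
at most `2 ^ k` sets `I` contributes at most `λ + P(Λ)`.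

Finally `rank Π_m` does not depend on `m ∈ M` and equals `∑ b, ‖Π_m b‖²`. Replacing the factor
`2 ^ k / d_i` of `‖Π_m b‖²` by `1 / rank Π_m` therefore costs at most the deviation already bounded,
which is where the factor `2` comes from.
-/

open Module
open scoped MonoidAlgebra

section Irreducible

variable {G V V' : Type*} [Group G] [AddCommGroup V] [Module ℂ V] [AddCommGroup V'] [Module ℂ V']
  {ρ : Representation ℂ G V} {ρ' : Representation ℂ G V'}

lemma isIrreducibleRep_iff : IsIrreducibleRep ρ ↔ ρ.IsIrreducible := by
  constructor
  · rintro ⟨⟨v, hv⟩, hρ⟩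
    refine { exists_pair_ne := ⟨⊥, ⊤, fun h => hv ?_⟩, eq_bot_or_eq_top := fun U => ?_ }
    · exact (Submodule.eq_bot_iff ⊤).1 (congrArg Subrepresentation.toSubmodule h).symm v trivial
    · exact (hρ U.toSubmodule U.apply_mem_toSubmodule).imp
        (fun h => Subrepresentation.toSubmodule_injective h)
        (fun h => Subrepresentation.toSubmodule_injective h)
  · intro h
    refine ⟨?_, fun U hU => ?_⟩
    · by_contra! hV
      exact bot_ne_top (α := Subrepresentation ρ) <| Subrepresentation.toSubmodule_injective <|
        ((Submodule.eq_bot_iff ⊤).2 fun v _ => hV v).symm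
    · exact (h.eq_bot_or_eq_top ⟨U, hU⟩).imp (congrArg Subrepresentation.toSubmodule)
        (congrArg Subrepresentation.toSubmodule)

lemma repIso_iff_nonempty_equiv : RepIso ρ ρ' ↔ Nonempty (ρ.Equiv ρ') :=
  ⟨fun ⟨e, he⟩ => ⟨.mk e fun g => LinearMap.ext (he g)⟩,
    fun ⟨φ⟩ => ⟨φ.toLinearEquiv, φ.toIntertwiningMap.isIntertwining⟩⟩

lemma IsIrreducibleRep.congr (hρ : IsIrreducibleRep ρ) (h : RepIso ρ ρ') :
    IsIrreducibleRep ρ' := by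
  obtain ⟨⟨v, hv⟩, hρ⟩ := hρ
  obtain ⟨e, he⟩ := h
  refine ⟨⟨e v, by simpa using hv⟩, fun U hU => ?_⟩
  have hinv : ∀ g v, v ∈ U.comap (e : V →ₗ[ℂ] V') → ρ g v ∈ U.comap (e : V →ₗ[ℂ] V') :=
    fun g v hv => by simpa [he] using hU g _ hv
  have hmap := Submodule.map_comap_eq_of_surjective (f := (e : V →ₗ[ℂ] V')) e.surjective U
  rcases hρ _ hinv with h | h <;> rw [h] at hmap
  · exact .inl (by rw [← hmap, Submodule.map_bot])
  · exact .inr (by rw [← hmap, Submodule.map_top, LinearEquiv.range])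

lemma map_asAlgebraHom_apply {e : V ≃ₗ[ℂ] V'} (he : ∀ g v, e (ρ g v) = ρ' g (e v))
    (x : ℂ[G]) (v : V) : e (ρ.asAlgebraHom x v) = ρ'.asAlgebraHom x (e v) := by
  induction x using MonoidAlgebra.induction_on with
  | of g => simp [he]
  | add x y hx hy => simp [hx, hy]
  | smul c x hx => simp [hx]

lemma asAlgebraHom_eq_sum [Fintype G] (ρ : Representation ℂ G V) (x : ℂ[G]) :
    ρ.asAlgebraHom x = ∑ g, x.coeff g • ρ g := by
  rw [Representation.asAlgebraHom_def, MonoidAlgebra.lift_apply,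
    Finsupp.sum_fintype _ _ fun g => zero_smul ℂ (ρ g)]

lemma asAlgebraHom_ofModule'_apply [Module ℂ[G] V] [IsScalarTower ℂ ℂ[G] V] (x : ℂ[G]) (v : V) :
    (Representation.ofModule' V : Representation ℂ G V).asAlgebraHom x v = x • v :=
  congr($((MonoidAlgebra.lift ℂ _ G).apply_symm_apply (Algebra.lsmul ℂ ℂ V)) x v)

lemma isIrreducibleRep_ofModule' (V : Type*) [AddCommGroup V] [Module ℂ V] [Module ℂ[G] V]
    [IsScalarTower ℂ ℂ[G] V] [hV : IsSimpleModule ℂ[G] V] :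
    IsIrreducibleRep (Representation.ofModule' V : Representation ℂ G V) := by
  have := IsSimpleModule.nontrivial ℂ[G] V
  refine ⟨exists_ne 0, fun U hU => ?_⟩
  let U' : Submodule ℂ[G] V := { U with
    smul_mem' := fun z v hv => by
      change z • v ∈ U
      rw [← asAlgebraHom_ofModule'_apply]
      induction z using MonoidAlgebra.induction_on with
      | of g => simpa using hU g v hv
      | add x y hx hy => simpa using U.add_mem hx hy
      | smul c x hx => simpa using U.smul_mem c hx }
  refine (hV.eq_bot_or_eq_top U').imp (fun h => ?_) (fun h => ?_) <;>
    exact Submodule.ext fun v => SetLike.ext_iff.1 h v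

variable [FiniteDimensional ℂ V]

lemma IsIrreducibleRep.finrank_pos (hρ : IsIrreducibleRep ρ) : 0 < finrank ℂ V :=
  finrank_pos_iff_exists_ne_zero.2 hρ.1

lemma IsIrreducibleRep.finrank_ne_zero (hρ : IsIrreducibleRep ρ) : (finrank ℂ V : ℂ) ≠ 0 :=
  Nat.cast_ne_zero.2 hρ.finrank_pos.ne'

lemma IsIrreducibleRep.asAlgebraHom_of_mem_center (hρ : IsIrreducibleRep ρ) {z : ℂ[G]}
    (hz : z ∈ Submonoid.center ℂ[G]) :
    ρ.asAlgebraHom z = (LinearMap.trace ℂ V (ρ.asAlgebraHom z) / finrank ℂ V) • 1 := by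
  have := isIrreducibleRep_iff.1 hρ
  obtain ⟨c, hc⟩ := Representation.IsIrreducible.algebraMap_intertwiningMap_bijective_of_isAlgClosed
    (ρ := ρ) |>.surjective (.centralAlgebraMul ρ hz)
  have hzc : ρ.asAlgebraHom z = c • 1 := LinearMap.ext fun v => congr($hc v).symm
  rw [hzc, map_smul, LinearMap.trace_one, smul_eq_mul, mul_div_cancel_right₀ c hρ.finrank_ne_zero]

end Irreducible

section CompleteFamily

variable {G : Type*} [Group G] {J : Type*}
  {W : J → Type*} [∀ j, NormedAddCommGroup (W j)] [∀ j, InnerProductSpace ℂ (W j)]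
  [∀ j, FiniteDimensional ℂ (W j)] {σ : ∀ j, Representation ℂ G (W j)}

lemma IsCompleteFamily.exists_repIso (hσ : IsCompleteFamily W σ) {V : Type*} [AddCommGroup V]
    [Module ℂ V] [FiniteDimensional ℂ V] {ρ : Representation ℂ G V} (hρ : IsIrreducibleRep ρ) :
    ∃ j, RepIso ρ (σ j) := by
  let e : V ≃ₗ[ℂ] (Fin (finrank ℂ V) → ℂ) := (finBasis ℂ V).equivFun
  let ρ' : Representation ℂ G (Fin (finrank ℂ V) → ℂ) :=
    (e.conjAlgEquiv ℂ : End ℂ V →* End ℂ (Fin (finrank ℂ V) → ℂ)).comp ρ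
  have he : ∀ g v, e (ρ g v) = ρ' g (e v) := fun g v => by
    simp [ρ', LinearEquiv.conjAlgEquiv_apply]
  obtain ⟨j, f, hf⟩ := hσ.2.2.2 _ ρ' (hρ.congr ⟨e, he⟩)
  exact ⟨j, e.trans f, fun g v => by simp [he, hf]⟩

-- `ℂ[G]` is semisimple by Maschke, so its Jacobson radical, the intersection of the annihilators
-- of the simple modules, vanishes.
lemma IsCompleteFamily.eq_of_asAlgebraHom_eq [Finite G] (hσ : IsCompleteFamily W σ) {x y : ℂ[G]}
    (h : ∀ j, (σ j).asAlgebraHom x = (σ j).asAlgebraHom y) : x = y := by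
  have : NeZero (Nat.card G : ℂ) := ⟨Nat.cast_ne_zero.2 Nat.card_pos.ne'⟩
  suffices x - y ∈ Ring.jacobson ℂ[G] by
    rwa [IsSemisimpleRing.jacobson_eq_bot, Submodule.mem_bot, sub_eq_zero] at this
  rw [Ring.jacobson_eq_sInf_isMaximal, Submodule.mem_sInf]
  intro I (hI : Ideal.IsMaximal I)
  have : IsSimpleModule ℂ[G] (ℂ[G] ⧸ I) := isSimpleModule_iff_isCoatom.2 hI.out
  obtain ⟨j, e, he⟩ := hσ.exists_repIso (isIrreducibleRep_ofModule' (ℂ[G] ⧸ I))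
  have hxy : (x - y) • (Submodule.Quotient.mk 1 : ℂ[G] ⧸ I) = 0 := e.injective <| by
    rw [← asAlgebraHom_ofModule'_apply, map_asAlgebraHom_apply he, map_sub, h, sub_self,
      LinearMap.zero_apply, map_zero]
  rwa [← Submodule.Quotient.mk_smul, smul_eq_mul, mul_one, Submodule.Quotient.mk_eq_zero] at hxy

end CompleteFamily

section GroupAlgebra

variable {G : Type*} [Group G]

lemma mem_center_of_coeff_conj {R : Type*} [CommSemiring R] {x : R[G]}
    (hx : ∀ g h, x.coeff (h * g * h⁻¹) = x.coeff g) :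
    x ∈ Submonoid.center R[G] := by
  refine Submonoid.mem_center_iff.2 fun y => ?_
  induction y using MonoidAlgebra.induction_on with
  | of h =>
    ext g
    simpa [MonoidAlgebra.of_apply, mul_assoc] using (hx (h⁻¹ * g) h).symm
  | add y z hy hz => rw [add_mul, mul_add, hy, hz]
  | smul c y hy => rw [smul_mul_assoc, mul_smul_comm, hy]

/-- The uniform average of the elements of `M` in the group algebra. For a conjugacy class `M` it is
central. -/
def classAverage (M : Finset G) : ℂ[G] :=
  (M.card : ℂ)⁻¹ • ∑ m ∈ M, MonoidAlgebra.single m 1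

lemma classAverage_mem_center {M : Finset G} {m₀ : G} (hM : ∀ m, m ∈ M ↔ IsConj m₀ m) :
    classAverage M ∈ Submonoid.center ℂ[G] := by
  classical
  refine mem_center_of_coeff_conj fun g h => ?_
  have hconj : h * g * h⁻¹ ∈ M ↔ g ∈ M := by
    have hgh : IsConj g (h * g * h⁻¹) := isConj_iff.2 ⟨h, rfl⟩
    rw [hM, hM]
    exact ⟨fun hm => hm.trans hgh.symm, fun hm => hm.trans hgh⟩
  simp [classAverage, Finsupp.single_apply, hconj]

variable {V : Type*} [AddCommGroup V] [Module ℂ V]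

lemma asAlgebraHom_classAverage (ρ : Representation ℂ G V) (M : Finset G) :
    ρ.asAlgebraHom (classAverage M) = (M.card : ℂ)⁻¹ • ∑ m ∈ M, ρ m := by
  simp [classAverage]

lemma trace_asAlgebraHom_classAverage (ρ : Representation ℂ G V) {M : Finset G} {m₀ : G}
    (hm₀ : m₀ ∈ M) (hM : ∀ m, m ∈ M ↔ IsConj m₀ m) :
    LinearMap.trace ℂ V (ρ.asAlgebraHom (classAverage M)) = repChar ρ m₀ := by
  have hchar : ∀ m ∈ M, repChar ρ m = repChar ρ m₀ := fun m hm => by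
    obtain ⟨c, rfl⟩ := isConj_iff.1 ((hM m).1 hm)
    exact ρ.char_conj m₀ c
  have hcard : (M.card : ℂ) ≠ 0 := Nat.cast_ne_zero.2 (Finset.card_ne_zero_of_mem hm₀)
  calc
    _ = (M.card : ℂ)⁻¹ * ∑ m ∈ M, repChar ρ m := by
      simp only [asAlgebraHom_classAverage, map_smul, map_sum, smul_eq_mul, repChar]
    _ = repChar ρ m₀ := by
      rw [Finset.sum_congr rfl hchar, Finset.sum_const, nsmul_eq_mul, inv_mul_cancel_left₀ hcard]

variable [Fintype G]

lemma trace_asAlgebraHom (ρ : Representation ℂ G V) (x : ℂ[G]) :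
    LinearMap.trace ℂ V (ρ.asAlgebraHom x) = ∑ g, x.coeff g * repChar ρ g := by
  simp only [asAlgebraHom_eq_sum, map_sum, map_smul, smul_eq_mul, repChar]

/-- The element `(d / |G|) ∑ g, χ(g⁻¹) g` of the group algebra, where `d` and `χ` are the dimension
and the character of `ρ`. For irreducible `ρ` it is the central idempotent that acts on every
representation as the projection onto the `ρ`-isotypic component. -/
def charIdempotent (ρ : Representation ℂ G V) : ℂ[G] :=
  .ofCoeff <| Finsupp.equivFunOnFinite.symm fun g =>
    (finrank ℂ V : ℂ) / Fintype.card G * repChar ρ g⁻¹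

lemma coeff_charIdempotent (ρ : Representation ℂ G V) (g : G) :
    (charIdempotent ρ).coeff g = (finrank ℂ V : ℂ) / Fintype.card G * repChar ρ g⁻¹ :=
  rfl

lemma charIdempotent_mem_center (ρ : Representation ℂ G V) :
    charIdempotent ρ ∈ Submonoid.center ℂ[G] :=
  mem_center_of_coeff_conj fun g h => by
    rw [coeff_charIdempotent, coeff_charIdempotent, conj_inv]
    congr 1
    exact ρ.char_conj g⁻¹ h

end GroupAlgebra

section CentralIdempotents

variable {G : Type*} [Group G] [Fintype G] {J : Type*}
  {W : J → Type*} [∀ j, NormedAddCommGroup (W j)] [∀ j, InnerProductSpace ℂ (W j)]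
  [∀ j, FiniteDimensional ℂ (W j)] {σ : ∀ j, Representation ℂ G (W j)}

lemma IsCompleteFamily.sum_repChar_mul_repChar_inv [DecidableEq J] (hσ : IsCompleteFamily W σ)
    (j l : J) :
    ∑ g, repChar (σ j) g⁻¹ * repChar (σ l) g = if j = l then (Fintype.card G : ℂ) else 0 := by
  classical
  have := isIrreducibleRep_iff.1 (hσ.2.1 j)
  have := isIrreducibleRep_iff.1 (hσ.2.1 l)
  have hG : (Nat.card G : ℂ) ≠ 0 := Nat.cast_ne_zero.2 Nat.card_pos.ne'
  have : Invertible (Nat.card G : ℂ) := invertibleOfNonzero hG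
  have hiso : Nonempty ((σ j).Equiv (σ l)) ↔ j = l := by
    rw [← repIso_iff_nonempty_equiv]
    refine ⟨fun h => by_contra fun hjl => hσ.2.2.1 j l hjl h, ?_⟩
    rintro rfl
    exact ⟨LinearEquiv.refl ℂ _, fun _ _ => rfl⟩
  have h := Representation.char_orthonormal (σ l) (σ j)
  simp only [hiso] at h
  rw [inv_mul_eq_iff_eq_mul₀ hG, mul_ite, mul_one, mul_zero, Nat.card_eq_fintype_card] at h
  exact (Finset.sum_congr rfl fun g _ => mul_comm ..).trans h

lemma IsCompleteFamily.asAlgebraHom_charIdempotent [DecidableEq J] (hσ : IsCompleteFamily W σ)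
    (j l : J) : (σ l).asAlgebraHom (charIdempotent (σ j)) = if j = l then 1 else 0 := by
  have hG : (Fintype.card G : ℂ) ≠ 0 := Nat.cast_ne_zero.2 Fintype.card_ne_zero
  rw [(hσ.2.1 l).asAlgebraHom_of_mem_center (charIdempotent_mem_center _), trace_asAlgebraHom]
  simp only [coeff_charIdempotent, mul_assoc]
  rw [← Finset.mul_sum, hσ.sum_repChar_mul_repChar_inv]
  split_ifs with h
  · subst h
    rw [div_mul_cancel₀ _ hG, div_self (hσ.2.1 j).finrank_ne_zero, one_smul]
  · rw [mul_zero, zero_div, zero_smul]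

lemma IsCompleteFamily.isIdempotentElem_charIdempotent (hσ : IsCompleteFamily W σ) (j : J) :
    IsIdempotentElem (charIdempotent (σ j)) := by
  classical
  refine hσ.eq_of_asAlgebraHom_eq fun l => ?_
  rw [map_mul, hσ.asAlgebraHom_charIdempotent]
  split_ifs <;> simp

variable [Fintype J]

lemma IsCompleteFamily.sum_charIdempotent (hσ : IsCompleteFamily W σ) :
    ∑ j, charIdempotent (σ j) = 1 := by
  classical
  refine hσ.eq_of_asAlgebraHom_eq fun l => ?_
  simp [hσ.asAlgebraHom_charIdempotent]

lemma IsCompleteFamily.classAverage_eq_sum (hσ : IsCompleteFamily W σ) {M : Finset G} {m₀ : G}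
    (hm₀ : m₀ ∈ M) (hM : ∀ m, m ∈ M ↔ IsConj m₀ m) :
    classAverage M = ∑ j, (repChar (σ j) m₀ / finrank ℂ (W j)) • charIdempotent (σ j) := by
  classical
  refine hσ.eq_of_asAlgebraHom_eq fun l => ?_
  rw [(hσ.2.1 l).asAlgebraHom_of_mem_center (classAverage_mem_center hM),
    trace_asAlgebraHom_classAverage _ hm₀ hM]
  simp [hσ.asAlgebraHom_charIdempotent]

end CentralIdempotents

section SymmetricProjection

lemma finrank_range_eq_trace {K V : Type*} [Field K] [AddCommGroup V] [Module K V]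
    [FiniteDimensional K V] {T : V →ₗ[K] V} (hT : IsIdempotentElem T) :
    (finrank K (LinearMap.range T) : K) = LinearMap.trace K V T :=
  (LinearMap.IsProj.trace (LinearMap.IsIdempotentElem.isProj_range T hT)).symm

variable {V : Type*} [NormedAddCommGroup V] [InnerProductSpace ℂ V] {T : V →ₗ[ℂ] V}

lemma inner_self_apply_eq_norm_sq (hT : T.IsSymmetricProjection) (v : V) :
    ⟪v, T v⟫_ℂ = ‖T v‖ ^ 2 := by
  calc ⟪v, T v⟫_ℂ = ⟪v, T (T v)⟫_ℂ := by rw [← Module.End.mul_apply, hT.isIdempotentElem]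
    _ = ⟪T v, T v⟫_ℂ := (hT.isSymmetric v (T v)).symm
    _ = ‖T v‖ ^ 2 := inner_self_eq_norm_sq_to_K (T v)

lemma sum_norm_sq_eq_finrank_range {ι : Type*} [Fintype ι] (b : OrthonormalBasis ι ℂ V)
    (hT : T.IsSymmetricProjection) :
    ∑ x, ‖T (b x)‖ ^ 2 = finrank ℂ (LinearMap.range T) := by
  have : FiniteDimensional ℂ V := b.toBasis.finiteDimensional_of_finite
  apply Complex.ofReal_injective
  push_cast
  rw [finrank_range_eq_trace hT.isIdempotentElem, LinearMap.trace_eq_sum_inner _ b]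
  exact Finset.sum_congr rfl fun x _ => (inner_self_apply_eq_norm_sq hT _).symm

end SymmetricProjection

section Unitary

variable {G V : Type*} [Group G] [NormedAddCommGroup V] [InnerProductSpace ℂ V]
  {ρ : Representation ℂ G V}

lemma IsUnitaryRep.inner_apply_left (hρ : IsUnitaryRep ρ) (g : G) (v w : V) :
    ⟪ρ g v, w⟫_ℂ = ⟪v, ρ g⁻¹ w⟫_ℂ := by
  rw [← hρ g v (ρ g⁻¹ w), Representation.self_inv_apply]

lemma IsUnitaryRep.norm_apply (hρ : IsUnitaryRep ρ) (g : G) (v : V) : ‖ρ g v‖ = ‖v‖ := by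
  rw [norm_eq_sqrt_re_inner (𝕜 := ℂ), norm_eq_sqrt_re_inner (𝕜 := ℂ), hρ g v v]

lemma IsUnitaryRep.isSymmetric_asAlgebraHom [Finite G] (hρ : IsUnitaryRep ρ) {x : ℂ[G]}
    (hx : ∀ g, x.coeff g⁻¹ = starRingEnd ℂ (x.coeff g)) : (ρ.asAlgebraHom x).IsSymmetric := by
  have := Fintype.ofFinite G
  intro v w
  simp only [asAlgebraHom_eq_sum, LinearMap.sum_apply, LinearMap.smul_apply, sum_inner, inner_sum,
    inner_smul_left, inner_smul_right]
  rw [← Equiv.sum_comp (Equiv.inv G)]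
  exact Finset.sum_congr rfl fun g _ => by
    rw [Equiv.inv_apply, hρ.inner_apply_left, inv_inv, hx, Complex.conj_conj]

variable [FiniteDimensional ℂ V]

lemma IsUnitaryRep.repChar_inv (hρ : IsUnitaryRep ρ) (g : G) :
    repChar ρ g⁻¹ = starRingEnd ℂ (repChar ρ g) := by
  rw [repChar, repChar, LinearMap.trace_eq_sum_inner _ (stdOrthonormalBasis ℂ V),
    LinearMap.trace_eq_sum_inner _ (stdOrthonormalBasis ℂ V), map_sum]
  exact Finset.sum_congr rfl fun i _ => by rw [← hρ.inner_apply_left, inner_conj_symm]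

lemma IsUnitaryRep.norm_repChar_le (hρ : IsUnitaryRep ρ) (g : G) :
    ‖repChar ρ g‖ ≤ finrank ℂ V := by
  let b := stdOrthonormalBasis ℂ V
  calc ‖repChar ρ g‖ = ‖∑ i, ⟪b i, ρ g (b i)⟫_ℂ‖ := by
        rw [repChar, LinearMap.trace_eq_sum_inner _ b]
    _ ≤ ∑ i, ‖b i‖ * ‖ρ g (b i)‖ :=
        norm_sum_le_of_le _ fun i _ => norm_inner_le_norm _ _
    _ = finrank ℂ V := by simp [hρ.norm_apply]

end Unitary

section Isotypic

variable {G : Type*} [Group G] [Fintype G] {J : Type*}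
  {W : J → Type*} [∀ j, NormedAddCommGroup (W j)] [∀ j, InnerProductSpace ℂ (W j)]
  [∀ j, FiniteDimensional ℂ (W j)] {σ : ∀ j, Representation ℂ G (W j)}
  {V : Type*} [NormedAddCommGroup V] [InnerProductSpace ℂ V] {τ : Representation ℂ G V}

lemma IsCompleteFamily.isSymmetricProjection_charIdempotent (hσ : IsCompleteFamily W σ)
    (hτ : IsUnitaryRep τ) (j : J) :
    (τ.asAlgebraHom (charIdempotent (σ j))).IsSymmetricProjection where
  isIdempotentElem := (hσ.isIdempotentElem_charIdempotent j).map τ.asAlgebraHom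
  isSymmetric := hτ.isSymmetric_asAlgebraHom fun g => by
    simp [coeff_charIdempotent, (hσ.1 j).repChar_inv]

lemma IsCompleteFamily.sum_norm_sq_charIdempotent [Fintype J] (hσ : IsCompleteFamily W σ)
    (hτ : IsUnitaryRep τ) (v : V) :
    ∑ j, ‖τ.asAlgebraHom (charIdempotent (σ j)) v‖ ^ 2 = ‖v‖ ^ 2 := by
  apply Complex.ofReal_injective
  push_cast
  simp only [← inner_self_apply_eq_norm_sq (hσ.isSymmetricProjection_charIdempotent hτ _)]
  rw [← inner_sum, ← LinearMap.sum_apply, ← map_sum, hσ.sum_charIdempotent, map_one,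
    Module.End.one_apply, inner_self_eq_norm_sq_to_K]
  rfl

lemma IsCompleteFamily.norm_inner_classAverage_le [Finite J] (hσ : IsCompleteFamily W σ)
    (hτ : IsUnitaryRep τ) {M : Finset G} {m₀ : G} (hm₀ : m₀ ∈ M) (hM : ∀ m, m ∈ M ↔ IsConj m₀ m)
    {Λ : Finset J} {lam : ℝ} (hlam : 0 ≤ lam)
    (hΛ : ∀ j ∉ Λ, ‖repChar (σ j) m₀‖ ≤ lam * finrank ℂ (W j)) (v : V) :
    ‖⟪v, τ.asAlgebraHom (classAverage M) v⟫_ℂ‖ ≤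
      lam * ‖v‖ ^ 2 + ∑ j ∈ Λ, ‖τ.asAlgebraHom (charIdempotent (σ j)) v‖ ^ 2 := by
  classical
  have := Fintype.ofFinite J
  let N (j : J) : ℝ := ‖τ.asAlgebraHom (charIdempotent (σ j)) v‖ ^ 2
  have hratio : ∀ j, ‖repChar (σ j) m₀‖ / finrank ℂ (W j) ≤ lam + if j ∈ Λ then 1 else 0 := by
    intro j
    have hd : (0 : ℝ) < finrank ℂ (W j) := Nat.cast_pos.2 (hσ.2.1 j).finrank_pos
    split_ifs with hj
    · exact ((div_le_one hd).2 ((hσ.1 j).norm_repChar_le m₀)).trans (le_add_of_nonneg_left hlam)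
    · rw [add_zero, div_le_iff₀ hd]
      exact hΛ j hj
  calc ‖⟪v, τ.asAlgebraHom (classAverage M) v⟫_ℂ‖
      = ‖∑ j, repChar (σ j) m₀ / finrank ℂ (W j) * (N j : ℂ)‖ := by
        simp [hσ.classAverage_eq_sum hm₀ hM, N,
          inner_self_apply_eq_norm_sq (hσ.isSymmetricProjection_charIdempotent hτ _)]
    _ ≤ ∑ j, ‖repChar (σ j) m₀‖ / finrank ℂ (W j) * N j :=
        norm_sum_le_of_le _ fun j _ => by simp [N]
    _ ≤ ∑ j, (lam + if j ∈ Λ then 1 else 0) * N j := by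
        gcongr with j
        exact hratio j
    _ = lam * ‖v‖ ^ 2 + ∑ j ∈ Λ, N j := by
        simp [add_mul, Finset.sum_add_distrib, ← Finset.mul_sum, N,
          hσ.sum_norm_sq_charIdempotent hτ]

end Isotypic

section PlancherelAverage

variable {A : Type*} [Group A] [Fintype A] {T : Type*} [Fintype T]
  {V : T → Type*} [∀ i, NormedAddCommGroup (V i)] [∀ i, InnerProductSpace ℂ (V i)]
  [∀ i, FiniteDimensional ℂ (V i)] {ρ : ∀ i, Representation ℂ A (V i)}

lemma IsCompleteFamily.sum_finrank_mul_repChar [DecidableEq A] (hρ : IsCompleteFamily V ρ) (a : A) :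
    ∑ i, (finrank ℂ (V i) : ℂ) / Fintype.card A * repChar (ρ i) a = if a = 1 then 1 else 0 := by
  have h := congr(($hρ.sum_charIdempotent).coeff a⁻¹)
  simpa [coeff_charIdempotent, MonoidAlgebra.one_def, Finsupp.single_apply, eq_comm (a := a)]
    using h

lemma IsCompleteFamily.sum_finrank_sq_div_card (hρ : IsCompleteFamily V ρ) :
    ∑ i, (finrank ℂ (V i) : ℝ) ^ 2 / Fintype.card A = 1 := by
  classical
  apply Complex.ofReal_injective
  push_cast
  rw [← (hρ.sum_finrank_mul_repChar 1).trans (if_pos rfl)]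
  exact Finset.sum_congr rfl fun i _ => by
    rw [repChar, map_one, LinearMap.trace_one, sq, mul_div_right_comm]

variable {G : Type*} [Group G] {φ : G →* A}

lemma IsCompleteFamily.sum_finrank_mul_trace_comp (hρ : IsCompleteFamily V ρ)
    (hφ : Function.Injective φ) (x : ℂ[G]) :
    ∑ i, (finrank ℂ (V i) : ℂ) / Fintype.card A *
      LinearMap.trace ℂ (V i) (Representation.asAlgebraHom ((ρ i).comp φ) x) = x.coeff 1 := by
  classical
  have := Fintype.ofInjective φ hφ
  calc
    _ = ∑ g, x.coeff g *
          ∑ i, (finrank ℂ (V i) : ℂ) / Fintype.card A * repChar (ρ i) (φ g) := by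
      simp only [trace_asAlgebraHom, Finset.mul_sum]
      rw [Finset.sum_comm]
      exact Finset.sum_congr rfl fun g _ => Finset.sum_congr rfl fun i _ => mul_left_comm ..
    _ = x.coeff 1 := by
      simp [hρ.sum_finrank_mul_repChar, map_eq_one_iff φ hφ]

variable [Fintype G] {J : Type*}
  {W : J → Type*} [∀ j, NormedAddCommGroup (W j)] [∀ j, InnerProductSpace ℂ (W j)]
  [∀ j, FiniteDimensional ℂ (W j)] {σ : ∀ j, Representation ℂ G (W j)}
  {ι : T → Type*} [∀ i, Fintype (ι i)]

lemma IsCompleteFamily.sum_finrank_mul_sum_norm_sq_charIdempotent (hρ : IsCompleteFamily V ρ)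
    (hφ : Function.Injective φ) (hσ : IsCompleteFamily W σ)
    (b : ∀ i, OrthonormalBasis (ι i) ℂ (V i)) (j : J) :
    ∑ i, (finrank ℂ (V i) : ℝ) / Fintype.card A *
        ∑ x, ‖Representation.asAlgebraHom ((ρ i).comp φ) (charIdempotent (σ j)) (b i x)‖ ^ 2 =
      (finrank ℂ (W j) : ℝ) ^ 2 / Fintype.card G := by
  have hproj (i : T) :
      (Representation.asAlgebraHom ((ρ i).comp φ) (charIdempotent (σ j))).IsSymmetricProjection :=
    hσ.isSymmetricProjection_charIdempotent (fun g => hρ.1 i (φ g)) j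
  apply Complex.ofReal_injective
  simp only [sum_norm_sq_eq_finrank_range _ (hproj _)]
  push_cast
  simp only [finrank_range_eq_trace (hproj _).isIdempotentElem]
  rw [hρ.sum_finrank_mul_trace_comp hφ, coeff_charIdempotent, inv_one, repChar, map_one,
    LinearMap.trace_one, sq, mul_div_right_comm]

lemma IsCompleteFamily.sum_finrank_mul_sum_norm_inner_classAverage_le (hρ : IsCompleteFamily V ρ)
    (hφ : Function.Injective φ) [Finite J] (hσ : IsCompleteFamily W σ)
    (b : ∀ i, OrthonormalBasis (ι i) ℂ (V i))
    {M : Finset G} {m₀ : G} (hm₀ : m₀ ∈ M) (hM : ∀ m, m ∈ M ↔ IsConj m₀ m)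
    {Λ : Finset J} {lam : ℝ} (hlam : 0 ≤ lam)
    (hΛ : ∀ j ∉ Λ, ‖repChar (σ j) m₀‖ ≤ lam * finrank ℂ (W j)) :
    ∑ i, (finrank ℂ (V i) : ℝ) / Fintype.card A * ∑ x,
        ‖⟪b i x, Representation.asAlgebraHom ((ρ i).comp φ) (classAverage M) (b i x)⟫_ℂ‖ ≤
      lam + ∑ j ∈ Λ, (finrank ℂ (W j) : ℝ) ^ 2 / Fintype.card G := by
  let N (i : T) (j : J) : ℝ :=
    ∑ x, ‖Representation.asAlgebraHom ((ρ i).comp φ) (charIdempotent (σ j)) (b i x)‖ ^ 2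
  have hbasis (i : T) :
      ∑ x, ‖⟪b i x, Representation.asAlgebraHom ((ρ i).comp φ) (classAverage M) (b i x)⟫_ℂ‖ ≤
        lam * finrank ℂ (V i) + ∑ j ∈ Λ, N i j := by
    calc
      _ ≤ ∑ x, (lam * ‖b i x‖ ^ 2 + ∑ j ∈ Λ, ‖Representation.asAlgebraHom ((ρ i).comp φ)
            (charIdempotent (σ j)) (b i x)‖ ^ 2) :=
        Finset.sum_le_sum fun x _ =>
          hσ.norm_inner_classAverage_le (fun g => hρ.1 i (φ g)) hm₀ hM hlam hΛ (b i x)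
      _ = lam * finrank ℂ (V i) + ∑ j ∈ Λ, N i j := by
        rw [Finset.sum_add_distrib, Finset.sum_comm]
        simp [finrank_eq_card_basis (b i).toBasis, mul_comm, N]
  calc
    _ ≤ ∑ i, (finrank ℂ (V i) : ℝ) / Fintype.card A *
          (lam * finrank ℂ (V i) + ∑ j ∈ Λ, N i j) := by
      gcongr with i
      exact hbasis i
    _ = lam * ∑ i, (finrank ℂ (V i) : ℝ) ^ 2 / Fintype.card A +
          ∑ j ∈ Λ, ∑ i, (finrank ℂ (V i) : ℝ) / Fintype.card A * N i j := by
      rw [Finset.sum_comm, Finset.mul_sum, ← Finset.sum_add_distrib]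
      refine Finset.sum_congr rfl fun i _ => ?_
      rw [mul_add, Finset.mul_sum]
      ring
    _ = lam + ∑ j ∈ Λ, (finrank ℂ (W j) : ℝ) ^ 2 / Fintype.card G := by
      rw [hρ.sum_finrank_sq_div_card, mul_one]
      simp only [N, hρ.sum_finrank_mul_sum_norm_sq_charIdempotent hφ hσ b]

end PlancherelAverage

lemma card_mul_sum_abs_inv_card_sub_div_sum_le {ι : Type*} [Fintype ι] {a : ι → ℝ}
    (ha : ∀ x, 0 ≤ a x) :
    Fintype.card ι * ∑ x, |1 / Fintype.card ι - a x / ∑ y, a y| ≤ 2 * ∑ x, |a x - 1| := by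
  rcases isEmpty_or_nonempty ι with hι | hι
  · simp
  set n := (Fintype.card ι : ℝ) with hn_def
  set s : ℝ := ∑ y, a y with hs_def
  have hn : 0 < n := Nat.cast_pos.2 Fintype.card_pos
  have hs : 0 ≤ s := Finset.sum_nonneg fun x _ => ha x
  have hnorm (x : ι) : s * (a x / s) = a x := mul_div_cancel_of_imp' fun h =>
    (Finset.sum_eq_zero_iff_of_nonneg fun y _ => ha y).1 h x (Finset.mem_univ x)
  have htotal : ∑ x, a x / s ≤ 1 := by
    rw [← Finset.sum_div]
    exact div_self_le_one s
  have hdev : |s - n| ≤ ∑ x, |a x - 1| := by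
    have hsub : s - n = ∑ x, (a x - 1) := by simp [hn_def, hs_def]
    rw [hsub]
    exact Finset.abs_sum_le_sum_abs _ _
  have hterm (x : ι) : n * |1 / n - a x / s| ≤ |a x - 1| + |s - n| * (a x / s) :=
    calc n * |1 / n - a x / s| = |(1 - a x) + (s - n) * (a x / s)| := by
          rw [← abs_of_pos hn, ← abs_mul, abs_of_pos hn]
          congr 1
          linear_combination mul_one_div_cancel hn.ne' - hnorm x
      _ ≤ |1 - a x| + |(s - n) * (a x / s)| := abs_add_le _ _
      _ = |a x - 1| + |s - n| * (a x / s) := by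
          rw [abs_mul, abs_sub_comm 1, abs_of_nonneg (div_nonneg (ha x) hs)]
  calc n * ∑ x, |1 / n - a x / s|
      ≤ ∑ x, (|a x - 1| + |s - n| * (a x / s)) := by
        rw [Finset.mul_sum]
        exact Finset.sum_le_sum fun x _ => hterm x
    _ = ∑ x, |a x - 1| + |s - n| * ∑ x, a x / s := by
        rw [Finset.sum_add_distrib, Finset.mul_sum]
    _ ≤ ∑ x, |a x - 1| + ∑ x, |a x - 1| :=
        add_le_add_right ((mul_le_of_le_one_right (abs_nonneg _) htotal).trans hdev) _
    _ = 2 * ∑ x, |a x - 1| := (two_mul _).symm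

section InvolutionProjection

variable {G : Type*} [Group G] {k : ℕ}

/-- The embedding `g ↦ g^I` of `G` into `G^k` along the coordinates in `I`. -/
def onIHom (I : Finset (Fin k)) : G →* (Fin k → G) where
  toFun g := onI g I
  map_one' := by ext i; simp [onI]
  map_mul' g h := by ext i; simp only [onI, Pi.mul_apply]; split_ifs <;> simp

lemma onIHom_injective {I : Finset (Fin k)} (hI : I.Nonempty) :
    Function.Injective (onIHom I : G →* (Fin k → G)) := by
  obtain ⟨i, hi⟩ := hI
  intro g h hgh
  simpa [onIHom, onI, hi] using congrFun hgh i

lemma onIHom_empty : (onIHom ∅ : G →* (Fin k → G)) = 1 := by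
  ext g i
  simp [onIHom, onI]

lemma onI_mul_onI {m : G} (hm : m * m = 1) (I I' : Finset (Fin k)) :
    onI m I * onI m I' = onI m (symmDiff I I') := by
  ext i
  by_cases h : i ∈ I <;> by_cases h' : i ∈ I' <;> simp [onI, Finset.mem_symmDiff, h, h', hm]

lemma inv_onI {m : G} (hm : m * m = 1) (I : Finset (Fin k)) : (onI m I)⁻¹ = onI m I := by
  ext i
  by_cases h : i ∈ I <;> simp [onI, h, inv_eq_of_mul_eq_one_left hm]

lemma isIdempotentElem_invProj {V : Type*} [AddCommGroup V] [Module ℂ V]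
    (ρ : Representation ℂ (Fin k → G) V) {m : G} (hm : m * m = 1) :
    IsIdempotentElem (invProj ρ m) := by
  have hshift (I : Finset (Fin k)) :
      ∑ I' : Finset (Fin k), ρ (onI m I) * ρ (onI m I') = ∑ I' : Finset (Fin k), ρ (onI m I') := by
    simp only [← map_mul, onI_mul_onI hm]
    exact Equiv.sum_comp (symmDiff_right_involutive I).toPerm fun I' => ρ (onI m I')
  rw [IsIdempotentElem, invProj, smul_mul_smul_comm, Finset.sum_mul_sum]
  simp only [hshift]
  rw [Finset.sum_const, ← Nat.cast_smul_eq_nsmul ℂ, smul_smul]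
  congr 1
  simp

lemma trace_invProj_eq_of_isConj {V : Type*} [AddCommGroup V] [Module ℂ V]
    (ρ : Representation ℂ (Fin k → G) V) {m m' : G} (h : IsConj m m') :
    LinearMap.trace ℂ V (invProj ρ m) = LinearMap.trace ℂ V (invProj ρ m') := by
  obtain ⟨c, rfl⟩ := isConj_iff.1 h
  simp only [invProj, map_smul, map_sum]
  congr 1
  refine Finset.sum_congr rfl fun I _ => ?_
  exact (Representation.char_conj (ρ.comp (onIHom I)) m c).symm

lemma finrank_range_invProj_eq_of_isConj {V : Type*} [AddCommGroup V] [Module ℂ V]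
    [FiniteDimensional ℂ V] (ρ : Representation ℂ (Fin k → G) V) {m m' : G} (h : IsConj m m')
    (hm : m * m = 1) (hm' : m' * m' = 1) :
    finrank ℂ (LinearMap.range (invProj ρ m)) = finrank ℂ (LinearMap.range (invProj ρ m')) := by
  apply Nat.cast_injective (R := ℂ)
  rw [finrank_range_eq_trace (isIdempotentElem_invProj ρ hm),
    finrank_range_eq_trace (isIdempotentElem_invProj ρ hm'), trace_invProj_eq_of_isConj ρ h]

variable {V : Type*} [NormedAddCommGroup V] [InnerProductSpace ℂ V]
  {ρ : Representation ℂ (Fin k → G) V}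

lemma IsUnitaryRep.isSymmetricProjection_invProj (hρ : IsUnitaryRep ρ) {m : G} (hm : m * m = 1) :
    (invProj ρ m).IsSymmetricProjection where
  isIdempotentElem := isIdempotentElem_invProj ρ hm
  isSymmetric v w := by
    simp only [invProj, LinearMap.sum_apply, LinearMap.smul_apply, sum_inner, inner_sum,
      inner_smul_left, inner_smul_right, hρ.inner_apply_left, inv_onI hm, map_inv₀, map_pow,
      Complex.conj_ofNat]

/-- `2^k` times the average of `‖Π_m v‖²` over `m ∈ M`: the normalization under which a unit vector
`v` has weight close to `1`. -/
def projWeight (ρ : Representation ℂ (Fin k → G) V) (M : Finset G) (v : V) : ℝ :=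
  2 ^ k * ((M.card : ℝ)⁻¹ * ∑ m ∈ M, ‖invProj ρ m v‖ ^ 2)

lemma projWeight_nonneg (ρ : Representation ℂ (Fin k → G) V) (M : Finset G) (v : V) :
    0 ≤ projWeight ρ M v := by
  unfold projWeight
  positivity

lemma IsUnitaryRep.projWeight_eq_sum (hρ : IsUnitaryRep ρ) {M : Finset G}
    (hinv : ∀ m ∈ M, m * m = 1) (v : V) :
    (projWeight ρ M v : ℂ) = ∑ I : Finset (Fin k),
      ⟪v, Representation.asAlgebraHom (ρ.comp (onIHom I)) (classAverage M) v⟫_ℂ := by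
  have hm (m : G) (hm : m ∈ M) :
      (‖invProj ρ m v‖ : ℂ) ^ 2 = (2 ^ k)⁻¹ * ∑ I : Finset (Fin k), ⟪v, ρ (onI m I) v⟫_ℂ := by
    rw [← inner_self_apply_eq_norm_sq (hρ.isSymmetricProjection_invProj (hinv m hm)), invProj,
      LinearMap.smul_apply, LinearMap.sum_apply, inner_smul_right, inner_sum]
  rw [projWeight]
  push_cast
  rw [Finset.sum_congr rfl hm, ← Finset.mul_sum, mul_left_comm,
    mul_inv_cancel_left₀ (pow_ne_zero k two_ne_zero), Finset.sum_comm, Finset.mul_sum]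
  refine Finset.sum_congr rfl fun I _ => ?_
  rw [asAlgebraHom_classAverage, LinearMap.smul_apply, LinearMap.sum_apply, inner_smul_right,
    inner_sum]
  rfl

lemma IsUnitaryRep.abs_projWeight_sub_le (hρ : IsUnitaryRep ρ) {M : Finset G} (hM : M.Nonempty)
    (hinv : ∀ m ∈ M, m * m = 1) (v : V) :
    |projWeight ρ M v - ‖v‖ ^ 2| ≤ ∑ I ∈ Finset.univ.erase (∅ : Finset (Fin k)),
      ‖⟪v, Representation.asAlgebraHom (ρ.comp (onIHom I)) (classAverage M) v⟫_ℂ‖ := by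
  have hcard : (M.card : ℂ) ≠ 0 := Nat.cast_ne_zero.2 hM.card_ne_zero
  have hempty : Representation.asAlgebraHom (ρ.comp (onIHom ∅)) (classAverage M) = 1 := by
    rw [asAlgebraHom_classAverage, onIHom_empty, MonoidHom.comp_one]
    simp [← Nat.cast_smul_eq_nsmul ℂ, hcard]
  have hnorm : ⟪v, v⟫_ℂ = (‖v‖ : ℂ) ^ 2 := inner_self_eq_norm_sq_to_K v
  rw [← Real.norm_eq_abs, ← Complex.norm_real]
  push_cast
  rw [hρ.projWeight_eq_sum hinv, ← Finset.add_sum_erase _ _ (Finset.mem_univ ∅), hempty,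
    Module.End.one_apply, hnorm, add_sub_cancel_left]
  exact norm_sum_le _ _

lemma IsUnitaryRep.sum_projWeight [FiniteDimensional ℂ V] {ι : Type*} [Fintype ι]
    (hρ : IsUnitaryRep ρ) (b : OrthonormalBasis ι ℂ V)
    {M : Finset G} {m₀ : G} (hm₀ : m₀ ∈ M) (hM : ∀ m ∈ M, IsConj m₀ m)
    (hinv : ∀ m ∈ M, m * m = 1) :
    ∑ x, projWeight ρ M (b x) = 2 ^ k * finrank ℂ (LinearMap.range (invProj ρ m₀)) := by
  have hcard : (M.card : ℝ) ≠ 0 := Nat.cast_ne_zero.2 (Finset.card_ne_zero_of_mem hm₀)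
  have hrank (m : G) (hm : m ∈ M) : ∑ x, ‖invProj ρ m (b x)‖ ^ 2 =
      (finrank ℂ (LinearMap.range (invProj ρ m₀)) : ℝ) := by
    rw [sum_norm_sq_eq_finrank_range b (hρ.isSymmetricProjection_invProj (hinv m hm)),
      finrank_range_invProj_eq_of_isConj ρ (hM m hm) (hinv m₀ hm₀) (hinv m hm)]
  simp only [projWeight]
  rw [← Finset.mul_sum, ← Finset.mul_sum, Finset.sum_comm, Finset.sum_congr rfl hrank,
    Finset.sum_const, nsmul_eq_mul, inv_mul_cancel_left₀ hcard]

lemma IsUnitaryRep.finrank_mul_sum_abs_inv_finrank_sub_average_le [FiniteDimensional ℂ V]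
    {ι : Type*} [Fintype ι] (hρ : IsUnitaryRep ρ) (b : OrthonormalBasis ι ℂ V)
    {M : Finset G} {m₀ : G} (hm₀ : m₀ ∈ M) (hM : ∀ m ∈ M, IsConj m₀ m)
    (hinv : ∀ m ∈ M, m * m = 1) :
    finrank ℂ V * ∑ x, |1 / (finrank ℂ V : ℝ) - 1 / (M.card : ℝ) *
        ∑ m ∈ M, ‖invProj ρ m (b x)‖ ^ 2 / (finrank ℂ (LinearMap.range (invProj ρ m)) : ℝ)| ≤
      2 * ∑ I ∈ Finset.univ.erase (∅ : Finset (Fin k)), ∑ x,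
        ‖⟪b x, Representation.asAlgebraHom (ρ.comp (onIHom I)) (classAverage M) (b x)⟫_ℂ‖ := by
  have hweight (x : ι) : 1 / (M.card : ℝ) *
        ∑ m ∈ M, ‖invProj ρ m (b x)‖ ^ 2 / (finrank ℂ (LinearMap.range (invProj ρ m)) : ℝ) =
      projWeight ρ M (b x) / ∑ y, projWeight ρ M (b y) := by
    have hrank (m : G) (hm : m ∈ M) :=
      finrank_range_invProj_eq_of_isConj ρ (hM m hm) (hinv m₀ hm₀) (hinv m hm)
    rw [hρ.sum_projWeight b hm₀ hM hinv, projWeight, mul_div_mul_left _ _ (by positivity),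
      Finset.sum_congr rfl fun m hm => by rw [← hrank m hm], ← Finset.sum_div, one_div,
      mul_div_assoc]
  simp only [hweight, finrank_eq_card_basis b.toBasis]
  refine (card_mul_sum_abs_inv_card_sub_div_sum_le fun x => projWeight_nonneg ρ M (b x)).trans ?_
  rw [Finset.sum_comm]
  gcongr with x
  simpa using hρ.abs_projWeight_sub_le ⟨m₀, hm₀⟩ hinv (b x)

end InvolutionProjection

lemma IsCompleteFamily.sum_onIHom_sum_norm_inner_classAverage_le {G : Type*} [Group G] [Fintype G]
    {k : ℕ} {T : Type*} [Fintype T]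
    {V : T → Type*} [∀ i, NormedAddCommGroup (V i)] [∀ i, InnerProductSpace ℂ (V i)]
    [∀ i, FiniteDimensional ℂ (V i)] {ρ : ∀ i, Representation ℂ (Fin k → G) (V i)}
    (hρ : IsCompleteFamily V ρ) {J : Type*} [Finite J]
    {W : J → Type*} [∀ j, NormedAddCommGroup (W j)] [∀ j, InnerProductSpace ℂ (W j)]
    [∀ j, FiniteDimensional ℂ (W j)] {σ : ∀ j, Representation ℂ G (W j)}
    (hσ : IsCompleteFamily W σ) {ι : T → Type*} [∀ i, Fintype (ι i)]
    (b : ∀ i, OrthonormalBasis (ι i) ℂ (V i))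
    {M : Finset G} {m₀ : G} (hm₀ : m₀ ∈ M) (hM : ∀ m, m ∈ M ↔ IsConj m₀ m)
    {Λ : Finset J} {lam : ℝ} (hlam : 0 ≤ lam)
    (hΛ : ∀ j ∉ Λ, ‖repChar (σ j) m₀‖ ≤ lam * finrank ℂ (W j)) :
    ∑ I ∈ Finset.univ.erase (∅ : Finset (Fin k)),
      ∑ i, (finrank ℂ (V i) : ℝ) / (Fintype.card G : ℝ) ^ k * ∑ x,
        ‖⟪b i x, Representation.asAlgebraHom ((ρ i).comp (onIHom I)) (classAverage M) (b i x)⟫_ℂ‖ ≤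
      2 ^ k * (lam + ∑ j ∈ Λ, (finrank ℂ (W j) : ℝ) ^ 2 / Fintype.card G) := by
  set D : ℝ := lam + ∑ j ∈ Λ, (finrank ℂ (W j) : ℝ) ^ 2 / Fintype.card G
  have hD : 0 ≤ D := by positivity
  calc
    _ ≤ ∑ _I ∈ Finset.univ.erase (∅ : Finset (Fin k)), D := by
      refine Finset.sum_le_sum fun I hI => ?_
      have hI : I.Nonempty := Finset.nonempty_iff_ne_empty.2 (Finset.ne_of_mem_erase hI)
      simpa using hρ.sum_finrank_mul_sum_norm_inner_classAverage_le
        (onIHom_injective hI) hσ b hm₀ hM hlam hΛ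
    _ ≤ ∑ _I : Finset (Fin k), D :=
      Finset.sum_le_sum_of_subset_of_nonneg (Finset.erase_subset _ _) fun _ _ _ => hD
    _ = 2 ^ k * D := by simp

/-- (Corollary 7 of the paper.) With
`H_m(i,b) = ‖Π_m^{(i)} b‖² / rank(Π_m^{(i)})` (convention `x/0 = 0`), the Plancherel average of
the ℓ¹-distance between the uniform distribution and `E_m H_m(i,·)` is at most
`2 · 2^k · (λ + P(Λ))`. -/
theorem stmt13 {G : Type*} [Group G] [Fintype G]
    {J : Type*} [Fintype J]
    (W : J → Type*) [∀ j, NormedAddCommGroup (W j)] [∀ j, InnerProductSpace ℂ (W j)]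
    [∀ j, FiniteDimensional ℂ (W j)]
    (σ : ∀ j, Representation ℂ G (W j)) (hfam : IsCompleteFamily W σ)
    (M : Finset G) (m₀ : G) (hm₀M : m₀ ∈ M)
    (hM : ∀ m : G, m ∈ M ↔ IsConj m₀ m)
    (hinv : ∀ m ∈ M, m * m = 1 ∧ m ≠ 1)
    {k : ℕ} (hk : 1 ≤ k)
    {T : Type*} [Fintype T]
    (Vi : T → Type*) [∀ i, NormedAddCommGroup (Vi i)] [∀ i, InnerProductSpace ℂ (Vi i)]
    [∀ i, FiniteDimensional ℂ (Vi i)]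
    (ρi : ∀ i, Representation ℂ (Fin k → G) (Vi i)) (hfam' : IsCompleteFamily Vi ρi)
    (ι : T → Type*) [∀ i, Fintype (ι i)] (B : ∀ i, OrthonormalBasis (ι i) ℂ (Vi i))
    (Λ : Finset J) (lam : ℝ) (hlam0 : 0 ≤ lam) (hlam1 : lam ≤ 1)
    (hΛ : ∀ j ∉ Λ, ‖repChar (σ j) m₀‖ ≤ lam * (Module.finrank ℂ (W j) : ℝ)) :
    ∑ i, (Module.finrank ℂ (Vi i) : ℝ) ^ 2 / (Fintype.card G : ℝ) ^ k *
        ∑ x : ι i,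
          |1 / (Module.finrank ℂ (Vi i) : ℝ)
            - (1 / (M.card : ℝ)) * ∑ m ∈ M,
                ‖invProj (ρi i) m (B i x)‖ ^ 2
                  / (Module.finrank ℂ (LinearMap.range (invProj (ρi i) m)) : ℝ)|
      ≤ 2 * 2 ^ k *
          (lam + ∑ j ∈ Λ, (Module.finrank ℂ (W j) : ℝ) ^ 2 / (Fintype.card G : ℝ)) := by
  let S (i : T) (I : Finset (Fin k)) : ℝ := ∑ x,
    ‖⟪B i x, Representation.asAlgebraHom ((ρi i).comp (onIHom I)) (classAverage M) (B i x)⟫_ℂ‖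
  have hbasis (i : T) := (hfam'.1 i).finrank_mul_sum_abs_inv_finrank_sub_average_le (B i) hm₀M
    (fun m hm => (hM m).1 hm) (fun m hm => (hinv m hm).1)
  calc
    _ ≤ ∑ i, (finrank ℂ (Vi i) : ℝ) / (Fintype.card G : ℝ) ^ k *
          (2 * ∑ I ∈ Finset.univ.erase ∅, S i I) := by
      refine Finset.sum_le_sum fun i _ => ?_
      rw [sq, mul_div_right_comm, mul_assoc]
      exact mul_le_mul_of_nonneg_left (hbasis i) (by positivity)
    _ = 2 * ∑ I ∈ Finset.univ.erase ∅,
          ∑ i, (finrank ℂ (Vi i) : ℝ) / (Fintype.card G : ℝ) ^ k * S i I := by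
      simp only [Finset.mul_sum, mul_left_comm]
      exact Finset.sum_comm
    _ ≤ 2 * (2 ^ k * (lam + ∑ j ∈ Λ, (finrank ℂ (W j) : ℝ) ^ 2 / (Fintype.card G : ℝ))) := by
      gcongr
      exact hfam'.sum_onIHom_sum_norm_inner_classAverage_le hfam B hm₀M hM hlam0 hΛ
    _ = _ := (mul_assoc _ _ _).symm
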